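/- Let n ≥ 3. There exist constants ε₀ ∈ (0,1), R₀ > 0 and a₃ > 0, depending only on n, such that for every smooth ℤⁿ-periodic real-valued eigenfunction ψ : ℝⁿ → ℝ of the Euclidean Laplacian with eigenvalue λ ≥ 1, ψ not identically zero, and every ball B_R(p) with 0 < R < R₀ satisfying {ψ = 0} ∩ B_{R/2}(p) ≠ ∅, one has Vol({ψ ≥ 0} ∩ B_R(p)) / Vol(B_R(p)) ≥ a₃ / N(λ)^{n-1}, where N(λ) = sup{ log( sup_{B_{2s}(x)} ψ² / sup_{B_s(x)} ψ² ) : x ∈ ℝⁿ, 0 < s ≤ ε₀ λ^{-1/2} }. -/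

import Mathlib

open MeasureTheory Metric Filter Real

noncomputable section

/-- `ψ : ℝⁿ → ℝ` is `ℤⁿ`-periodic: `ψ (x + v) = ψ x` for every integer vector `v`. -/
def ZnPeriodic (n : ℕ) (ψ : EuclideanSpace ℝ (Fin n) → ℝ) : Prop :=
  ∀ (x : EuclideanSpace ℝ (Fin n)) (v : Fin n → ℤ),
    ψ (show EuclideanSpace ℝ (Fin n) from WithLp.toLp 2 (fun i => x i + (v i : ℝ))) = ψ x

/-- The Euclidean Laplacian `Δψ = ∑ᵢ ∂²ψ/∂xᵢ²`. -/
def lap (n : ℕ) (ψ : EuclideanSpace ℝ (Fin n) → ℝ) (x : EuclideanSpace ℝ (Fin n)) : ℝ :=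
  ∑ i : Fin n,
    fderiv ℝ (fun y => fderiv ℝ ψ y (EuclideanSpace.single i (1:ℝ))) x
      (EuclideanSpace.single i (1:ℝ))

/-- `Ω` is a nodal domain of `ψ`: a connected component of `{ψ ≠ 0}`. -/
def IsNodalDomain {n : ℕ} (ψ : EuclideanSpace ℝ (Fin n) → ℝ)
    (Ω : Set (EuclideanSpace ℝ (Fin n))) : Prop :=
  ∃ x, ψ x ≠ 0 ∧ Ω = connectedComponentIn {y | ψ y ≠ 0} x

/-- The inner radius of a set: the supremum of radii of open balls contained in it. -/
def innerRadius {n : ℕ} (Ω : Set (EuclideanSpace ℝ (Fin n))) : ℝ :=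
  sSup {ρ : ℝ | 0 < ρ ∧ ∃ c, Metric.ball c ρ ⊆ Ω}

/-- The fundamental domain `[0,1)ⁿ` of the torus `ℝⁿ/ℤⁿ`. -/
def fundDom (n : ℕ) : Set (EuclideanSpace ℝ (Fin n)) :=
  {x | ∀ i, x i ∈ Set.Ico (0:ℝ) 1}

/-- `S ⊆ ℕ` has full density: `#(S ∩ [1,N]) / N → 1`. -/
def FullDensity (S : Set ℕ) : Prop :=
  Filter.Tendsto (fun N => (Nat.card ↥(S ∩ Set.Icc 1 N) : ℝ) / N) Filter.atTop (nhds 1)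


abbrev EE (n : ℕ) := EuclideanSpace ℝ (Fin n)

def GG {n : ℕ} (x : EE n) : ℝ := (max 0 (1 - ‖x‖^2))^3
def gg {n : ℕ} (x : EE n) : ℝ := 6 * (max 0 (1 - ‖x‖^2))^2

lemma hasDerivAt_maxcube (t : ℝ) : HasDerivAt (fun t : ℝ => (max 0 t)^3) (3 * (max 0 t)^2) t := by
  rcases lt_trichotomy t 0 with h | h | h
  · have : (fun t : ℝ => (max 0 t)^3) =ᶠ[nhds t] fun _ => 0 := by
      filter_upwards [Iio_mem_nhds h] with s hs
      have hs' : s < 0 := hs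
      simp [max_eq_left hs'.le]
    rw [max_eq_left h.le]
    simpa using (hasDerivAt_const t (0:ℝ)).congr_of_eventuallyEq this
  · subst h
    simp only [max_self]
    have : (fun t : ℝ => (max 0 t)^3) =O[nhds 0] fun t : ℝ => ‖t - 0‖^2 := by
      refine Asymptotics.IsBigO.of_bound 1 ?_
      filter_upwards [Icc_mem_nhds (show (-1:ℝ) < 0 by norm_num) (show (0:ℝ) < 1 by norm_num)] with s hs
      simp only [sub_zero, one_mul, norm_pow, Real.norm_eq_abs, sq_abs]
      rcases le_total s 0 with h | h
      · rw [max_eq_left h]; simp; positivity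
      · rw [max_eq_right h, abs_of_nonneg h]
        nlinarith [hs.2, sq_nonneg s]
    have h2 := this.hasFDerivAt (𝕜 := ℝ) (n := 2) (by norm_num)
    have h3 := h2.hasDerivAt
    simpa using h3
  · have : (fun t : ℝ => (max 0 t)^3) =ᶠ[nhds t] fun s => s^3 := by
      filter_upwards [Ioi_mem_nhds h] with s hs
      have hs' : 0 < s := hs
      simp [max_eq_right hs'.le]
    rw [max_eq_right h.le]
    simpa using (hasDerivAt_pow 3 t).congr_of_eventuallyEq this

lemma hasFDerivAt_GG {n : ℕ} (x : EE n) :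
    HasFDerivAt (GG (n := n)) ((-(gg x)) • (innerSL ℝ x)) x := by
  have h1 : HasFDerivAt (fun x : EE n => 1 - ‖x‖^2) (-(2 • (innerSL ℝ x))) x := by
    exact (hasStrictFDerivAt_norm_sq x).hasFDerivAt.const_sub 1
  have := (hasDerivAt_maxcube (1 - ‖x‖^2)).comp_hasFDerivAt x h1
  refine this.congr_fderiv ?_
  ext v
  simp [gg]
  ring

lemma fderiv_GG_single {n : ℕ} (x : EE n) (i : Fin n) :
    fderiv ℝ (GG (n := n)) x (EuclideanSpace.single i (1:ℝ)) = - (gg x * x i) := by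
  rw [(hasFDerivAt_GG x).fderiv]
  simp [EuclideanSpace.inner_single_right]

lemma GG_nonneg {n : ℕ} (x : EE n) : 0 ≤ GG x := by unfold GG; positivity
lemma gg_nonneg {n : ℕ} (x : EE n) : 0 ≤ gg x := by unfold gg; positivity
lemma GG_le_gg {n : ℕ} (x : EE n) : GG x ≤ gg x := by
  unfold GG gg
  have h0 : 0 ≤ max 0 (1 - ‖x‖^2) := le_max_left _ _
  have h1 : max 0 (1 - ‖x‖^2) ≤ 1 := max_le (by norm_num) (by nlinarith [sq_nonneg ‖x‖])
  nlinarith [sq_nonneg (max 0 (1 - ‖x‖^2))]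
lemma gg_le {n : ℕ} (x : EE n) : gg x ≤ 6 := by
  unfold gg
  have h0 : 0 ≤ max 0 (1 - ‖x‖^2) := le_max_left _ _
  have h1 : max 0 (1 - ‖x‖^2) ≤ 1 := max_le (by norm_num) (by nlinarith [sq_nonneg ‖x‖])
  nlinarith
lemma gg_eq_zero {n : ℕ} {x : EE n} (h : 1 ≤ ‖x‖) : gg x = 0 := by
  unfold gg
  rw [max_eq_left (by nlinarith)]; simp
lemma GG_eq_zero {n : ℕ} {x : EE n} (h : 1 ≤ ‖x‖) : GG x = 0 := by
  unfold GG
  rw [max_eq_left (by nlinarith)]; simp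
lemma continuous_GG {n : ℕ} : Continuous (GG (n := n)) := by unfold GG; fun_prop
lemma continuous_gg {n : ℕ} : Continuous (gg (n := n)) := by unfold gg; fun_prop
lemma cs_of_zero {n : ℕ} {f : EE n → ℝ} (h : ∀ x, 1 ≤ ‖x‖ → f x = 0) : HasCompactSupport f := by
  refine HasCompactSupport.intro (isCompact_closedBall (0 : EE n) 1) ?_
  intro x hx
  apply h
  simp at hx
  exact hx.le
lemma int_of_zero {n : ℕ} {f : EE n → ℝ} (hc : Continuous f) (h : ∀ x, 1 ≤ ‖x‖ → f x = 0) :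
    Integrable f := hc.integrable_of_hasCompactSupport (cs_of_zero h)

def AA {n : ℕ} (f : EE n → ℝ) (y : EE n) (r : ℝ) : ℝ := ∫ x, f (y + r • x) * gg x
def BB {n : ℕ} (f : EE n → ℝ) (y : EE n) (r : ℝ) : ℝ := ∫ x, f (y + r • x) * GG x
def cg (n : ℕ) : ℝ := ∫ x : EE n, gg x

lemma int_gg {n : ℕ} : Integrable (gg (n := n)) := int_of_zero continuous_gg fun x hx => gg_eq_zero hx
lemma int_GG {n : ℕ} : Integrable (GG (n := n)) := int_of_zero continuous_GG fun x hx => GG_eq_zero hx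
lemma int_fgg {n : ℕ} {f : EE n → ℝ} (hf : Continuous f) (y : EE n) (r : ℝ) :
    Integrable (fun x => f (y + r • x) * gg x) :=
  int_of_zero (by have := continuous_gg (n := n); fun_prop) fun x hx => by simp [gg_eq_zero hx]
lemma int_fGG {n : ℕ} {f : EE n → ℝ} (hf : Continuous f) (y : EE n) (r : ℝ) :
    Integrable (fun x => f (y + r • x) * GG x) :=
  int_of_zero (by have := continuous_GG (n := n); fun_prop) fun x hx => by simp [GG_eq_zero hx]

lemma cg_pos (n : ℕ) : 0 < cg n := by
  refine continuous_gg.integral_pos_of_hasCompactSupport_nonneg_nonzero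
    (cs_of_zero fun x hx => gg_eq_zero hx) gg_nonneg (x := 0) ?_
  simp [gg]

lemma intGG_le (n : ℕ) : ∫ x : EE n, GG x ≤ cg n :=
  integral_mono int_GG int_gg GG_le_gg

lemma AA_zero {n : ℕ} (f : EE n → ℝ) (y : EE n) : AA f y 0 = f y * cg n := by
  simp [AA, cg, integral_const_mul]

lemma fderiv_eq_sum {n : ℕ} (L : EE n →L[ℝ] ℝ) (x : EE n) :
    L x = ∑ i, x i * L (EuclideanSpace.single i 1) := by
  conv_lhs => rw [← (EuclideanSpace.basisFun (Fin n) ℝ).sum_repr x]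
  simp

lemma hasDerivAt_AA_aux {n : ℕ} {f : EE n → ℝ} (hf : ContDiff ℝ (⊤ : ℕ∞) f) (y : EE n) (r : ℝ) :
    HasDerivAt (AA f y) (∫ x, fderiv ℝ f (y + r • x) x * gg x) r := by
  have hcd : Continuous (fderiv ℝ f) := hf.continuous_fderiv (by simp)
  have hfc := hf.continuous
  have hgc := continuous_gg (n := n)
  have hF' : Continuous fun q : ℝ × EE n => fderiv ℝ f (y + q.1 • q.2) q.2 * gg q.2 := by
    fun_prop
  obtain ⟨C, hC⟩ := ((isCompact_Icc (a := r-1) (b := r+1)).prod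
    (isCompact_closedBall (0 : EE n) 1)).exists_bound_of_continuousOn hF'.continuousOn
  refine (hasDerivAt_integral_of_dominated_loc_of_deriv_le (s := Set.Icc (r-1) (r+1))
    (bound := (closedBall (0 : EE n) 1).indicator fun _ => C)
    (F := fun r x => f (y + r • x) * gg x) (F' := fun r x => fderiv ℝ f (y + r • x) x * gg x)
    (Icc_mem_nhds (by linarith) (by linarith)) ?_ (int_fgg hfc y r) ?_ ?_ ?_ ?_).2
  · exact Filter.Eventually.of_forall fun s => (int_fgg hfc y s).aestronglyMeasurable
  · exact Continuous.aestronglyMeasurable (by fun_prop)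
  · refine Filter.Eventually.of_forall fun x s hs => ?_
    by_cases hx : x ∈ closedBall (0 : EE n) 1
    · rw [Set.indicator_of_mem hx]
      exact hC (s, x) ⟨hs, hx⟩
    · rw [Set.indicator_of_notMem hx, gg_eq_zero]
      · simp
      · simp at hx; exact hx.le
  · rw [integrable_indicator_iff measurableSet_closedBall]
    exact integrableOn_const measure_closedBall_lt_top.ne
  · refine Filter.Eventually.of_forall fun x s hs => ?_
    have h1 : HasDerivAt (fun s : ℝ => y + s • x) x s := by
      simpa using ((hasDerivAt_id s).smul_const x).const_add y
    have h2 : HasFDerivAt f (fderiv ℝ f (y + s • x)) (y + s • x) :=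
      (hf.differentiable (by simp) _).hasFDerivAt
    exact (h2.comp_hasDerivAt s h1).mul_const _

lemma contDiff_D {n : ℕ} {f : EE n → ℝ} (hf : ContDiff ℝ (⊤ : ℕ∞) f) (v : EE n) :
    ContDiff ℝ (⊤ : ℕ∞) (fun y => fderiv ℝ f y v) :=
  (hf.fderiv_right (m := (⊤ : ℕ∞)) (by simp)).clm_apply contDiff_const

lemma continuous_lap {n : ℕ} {f : EE n → ℝ} (hf : ContDiff ℝ (⊤ : ℕ∞) f) : Continuous (lap n f) := by
  unfold lap
  exact continuous_finsetSum _ fun i _ => (contDiff_D (contDiff_D hf _) _).continuous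

lemma hasDerivAt_AA {n : ℕ} {f : EE n → ℝ} (hf : ContDiff ℝ (⊤ : ℕ∞) f) (y : EE n) (r : ℝ) :
    HasDerivAt (AA f y) (r * BB (lap n f) y r) r := by
  refine (hasDerivAt_AA_aux hf y r).congr_deriv ?_
  have key : ∀ i : Fin n, 
      Integrable (fun x : EE n => fderiv ℝ f (y + r • x) (EuclideanSpace.single i 1) * (gg x * x i)) ∧
      ∫ x, fderiv ℝ f (y + r • x) (EuclideanSpace.single i 1) * (gg x * x i) =
      ∫ x, (r * fderiv ℝ (fun y => fderiv ℝ f y (EuclideanSpace.single i 1)) (y + r • x) (EuclideanSpace.single i 1)) * GG x := by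
    intro i
    set e : EE n := EuclideanSpace.single i 1
    set D : EE n → ℝ := fun y => fderiv ℝ f y e with hD
    have hDs : ContDiff ℝ (⊤ : ℕ∞) D := contDiff_D hf _
    have hDc := hDs.continuous
    have hDDc : Continuous fun y => fderiv ℝ D y e := (contDiff_D hDs e).continuous
    have hfd : ∀ x, HasFDerivAt (fun x => D (y + r • x)) (r • fderiv ℝ D (y + r • x)) x := by
      intro x
      have h1 : HasFDerivAt (fun x : EE n => y + r • x) (r • ContinuousLinearMap.id ℝ (EE n)) x :=
        ((hasFDerivAt_id x).const_smul r).const_add y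
      have h2 : HasFDerivAt D (fderiv ℝ D (y + r • x)) (y + r • x) :=
        (hDs.differentiable (by simp) _).hasFDerivAt
      refine (h2.comp x h1).congr_fderiv ?_
      ext v; simp
    have hgc := continuous_gg (n := n)
    have hGc := continuous_GG (n := n)
    have hi : Integrable (fun x : EE n => D (y + r • x) * (gg x * x i)) :=
      int_of_zero (by fun_prop) fun x hx => by simp [gg_eq_zero hx]
    refine ⟨hi, ?_⟩
    have ibp := integral_mul_fderiv_eq_neg_fderiv_mul_of_integrable (μ := (volume : Measure (EE n)))
      (f := fun x => D (y + r • x)) (g := GG) (v := e) ?_ ?_ ?_ ?_ ?_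
    · simp only [e, fderiv_GG_single] at ibp
      simp only [mul_neg, integral_neg, neg_inj] at ibp
      rw [ibp]
      congr 1
      ext x
      rw [(hfd x).fderiv]
      simp [e]
    · simp only [fun x => (hfd x).fderiv]
      refine int_of_zero ?_ fun x hx => by simp [GG_eq_zero hx]
      simp only [smul_apply]
      fun_prop
    · simp only [e, fderiv_GG_single]
      simpa using hi.neg
    · exact int_fGG hDc y r
    · intro x _; exact (hfd x).differentiableAt
    · intro x _; exact (hasFDerivAt_GG x).differentiableAt
  calc ∫ x, fderiv ℝ f (y + r • x) x * gg x
      = ∫ x, ∑ i, fderiv ℝ f (y + r • x) (EuclideanSpace.single i 1) * (gg x * x i) := by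
        congr 1; ext x
        rw [fderiv_eq_sum (fderiv ℝ f (y + r • x)) x, Finset.sum_mul]
        refine Finset.sum_congr rfl fun i _ => by ring
    _ = ∑ i, ∫ x, fderiv ℝ f (y + r • x) (EuclideanSpace.single i 1) * (gg x * x i) :=
        integral_finsetSum _ fun i _ => (key i).1
    _ = ∑ i, ∫ x, (r * fderiv ℝ (fun y => fderiv ℝ f y (EuclideanSpace.single i 1)) (y + r • x) (EuclideanSpace.single i 1)) * GG x :=
        Finset.sum_congr rfl fun i _ => (key i).2
    _ = ∫ x, ∑ i, (r * fderiv ℝ (fun y => fderiv ℝ f y (EuclideanSpace.single i 1)) (y + r • x) (EuclideanSpace.single i 1)) * GG x := by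
        rw [integral_finsetSum]
        intro i _
        have hc : Continuous fun y => r * fderiv ℝ (fun y => fderiv ℝ f y (EuclideanSpace.single i 1)) y (EuclideanSpace.single i 1) :=
          continuous_const.mul (contDiff_D (contDiff_D hf _) _).continuous
        exact int_fGG hc y r
    _ = r * BB (lap n f) y r := by
        unfold BB lap
        rw [← integral_const_mul]
        congr 1; ext x
        rw [Finset.sum_mul, Finset.mul_sum]
        refine Finset.sum_congr rfl fun i _ => by ring


lemma mem_cb {n : ℕ} {y x : EE n} {s r : ℝ} (hs : 0 ≤ s) (hsr : s ≤ r) (hx : ‖x‖ < 1) :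
    y + s • x ∈ closedBall y r := by
  rw [mem_closedBall, dist_eq_norm, add_sub_cancel_left, norm_smul, Real.norm_eq_abs, abs_of_nonneg hs]
  nlinarith

lemma AA_le {n : ℕ} {f : EE n → ℝ} (hf : ContDiff ℝ (⊤ : ℕ∞) f) (y : EE n) {r κ : ℝ} (hr : 0 ≤ r)
    (hκ : 0 ≤ κ) (h : ∀ x ∈ closedBall y r, lap n f x ≤ κ) :
    AA f y r ≤ cg n * (f y + κ * r^2 / 2) := by
  have hd : ∀ s, HasDerivAt (fun s => cg n * κ * (s^2/2) - AA f y s)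
      (cg n * κ * s - s * BB (lap n f) y s) s := by
    intro s
    have h1 : HasDerivAt (fun s : ℝ => s^2/2) s s := by
      have := (hasDerivAt_pow 2 s).div_const 2
      refine this.congr_deriv (by simp)
    exact (h1.const_mul (cg n * κ)).sub (hasDerivAt_AA hf y s)
  have hm : MonotoneOn (fun s => cg n * κ * (s^2/2) - AA f y s) (Set.Icc 0 r) := by
    refine monotoneOn_of_deriv_nonneg (convex_Icc 0 r)
      (fun s _ => (hd s).continuousAt.continuousWithinAt)
      (fun s _ => (hd s).differentiableAt.differentiableWithinAt) ?_
    intro s hs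
    rw [interior_Icc] at hs
    rw [(hd s).deriv]
    have : BB (lap n f) y s ≤ κ * cg n := by
      calc BB (lap n f) y s ≤ ∫ x : EE n, κ * GG x := by
            refine integral_mono (int_fGG (continuous_lap hf) y s) (int_GG.const_mul κ) fun x => ?_
            by_cases hx : ‖x‖ < 1
            · exact mul_le_mul_of_nonneg_right (h _ (mem_cb hs.1.le hs.2.le hx)) (GG_nonneg x)
            · simp [GG_eq_zero (not_lt.mp hx)]
        _ = κ * ∫ x : EE n, GG x := integral_const_mul _ _
        _ ≤ κ * cg n := mul_le_mul_of_nonneg_left (intGG_le n) hκ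
    nlinarith [hs.1]
  have := hm (Set.left_mem_Icc.mpr hr) (Set.right_mem_Icc.mpr hr) hr
  simp only [AA_zero] at this
  nlinarith

lemma AA_ge {n : ℕ} {u : EE n → ℝ} (hf : ContDiff ℝ (⊤ : ℕ∞) u) (y : EE n) {r lam : ℝ} (hr : 0 ≤ r)
    (hl : 0 ≤ lam) (h0 : ∀ x ∈ closedBall y r, 0 ≤ u x)
    (h : ∀ x ∈ closedBall y r, - lam * u x ≤ lap n u x) :
    cg n * u y ≤ Real.exp (lam * r^2/2) * AA u y r := by
  have hd : ∀ s, HasDerivAt (fun s => Real.exp (lam * s^2/2) * AA u y s)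
      (Real.exp (lam * s^2/2) * (lam * s) * AA u y s +
        Real.exp (lam * s^2/2) * (s * BB (lap n u) y s)) s := by
    intro s
    have h1 : HasDerivAt (fun s : ℝ => lam * s^2/2) (lam * s) s := by
      have := ((hasDerivAt_pow 2 s).const_mul lam).div_const 2
      refine this.congr_deriv ?_
      simp; ring
    exact h1.exp.mul (hasDerivAt_AA hf y s)
  have hm : MonotoneOn (fun s => Real.exp (lam * s^2/2) * AA u y s) (Set.Icc 0 r) := by
    refine monotoneOn_of_deriv_nonneg (convex_Icc 0 r)
      (fun s _ => (hd s).continuousAt.continuousWithinAt)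
      (fun s _ => (hd s).differentiableAt.differentiableWithinAt) ?_
    intro s hs
    rw [interior_Icc] at hs
    rw [(hd s).deriv]
    have : - lam * AA u y s ≤ BB (lap n u) y s := by
      unfold AA BB
      rw [← integral_const_mul]
      refine integral_mono ((int_fgg hf.continuous y s).const_mul _) (int_fGG (continuous_lap hf) y s) fun x => ?_
      by_cases hx : ‖x‖ < 1
      · have hmem := mem_cb (y := y) hs.1.le hs.2.le hx
        have h1 := mul_le_mul_of_nonneg_right (h _ hmem) (GG_nonneg x)
        have h2 := mul_le_mul_of_nonneg_left (GG_le_gg x) (mul_nonneg hl (h0 _ hmem))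
        dsimp only
        nlinarith
      · simp [GG_eq_zero (not_lt.mp hx), gg_eq_zero (not_lt.mp hx)]
    have he := Real.exp_pos (lam * s^2/2)
    have h3 : 0 ≤ s * (lam * AA u y s + BB (lap n u) y s) := mul_nonneg hs.1.le (by linarith)
    nlinarith [mul_nonneg he.le h3]
  have := hm (Set.left_mem_Icc.mpr hr) (Set.right_mem_Icc.mpr hr) hr
  simp only [AA_zero] at this
  simp at this
  linarith

lemma cov {n : ℕ} (f k : EE n → ℝ) (y : EE n) {r : ℝ} (hr : 0 < r) :
    ∫ x, f (y + r • x) * k x = (r^n)⁻¹ * ∫ x, f x * k (r⁻¹ • (x - y)) := by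
  have h1 := Measure.integral_comp_smul (volume : Measure (EE n)) (fun w => f (y + w) * k (r⁻¹ • w)) r
  have h2 := integral_add_left_eq_self (μ := (volume : Measure (EE n))) (fun x => f x * k (r⁻¹ • (x - y))) y
  simp only [smul_smul, inv_mul_cancel₀ hr.ne', one_smul, finrank_euclideanSpace, Fintype.card_fin, smul_eq_mul] at h1
  simp only [add_sub_cancel_left] at h2
  rw [h1, h2, abs_of_pos (by positivity)]

lemma int_sgg {n : ℕ} {f : EE n → ℝ} (hf : Continuous f) (y : EE n) {r : ℝ} (hr : 0 < r) :
    Integrable (fun x => f x * gg (r⁻¹ • (x - y))) := by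
  have hg := continuous_gg (n := n)
  refine Continuous.integrable_of_hasCompactSupport (by fun_prop) ?_
  refine HasCompactSupport.intro (isCompact_closedBall y r) fun x hx => ?_
  rw [gg_eq_zero, mul_zero]
  rw [mem_closedBall, not_le, dist_eq_norm] at hx
  rw [norm_smul, norm_inv, Real.norm_eq_abs, abs_of_pos hr, inv_mul_eq_div, le_div_iff₀ hr]
  linarith

lemma int_sGG {n : ℕ} {f : EE n → ℝ} (hf : Continuous f) (y : EE n) {r : ℝ} (hr : 0 < r) :
    Integrable (fun x => f x * GG (r⁻¹ • (x - y))) := by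
  have hg := continuous_GG (n := n)
  refine Continuous.integrable_of_hasCompactSupport (by fun_prop) ?_
  refine HasCompactSupport.intro (isCompact_closedBall y r) fun x hx => ?_
  rw [GG_eq_zero, mul_zero]
  rw [mem_closedBall, not_le, dist_eq_norm] at hx
  rw [norm_smul, norm_inv, Real.norm_eq_abs, abs_of_pos hr, inv_mul_eq_div, le_div_iff₀ hr]
  linarith

lemma norm_sc {n : ℕ} (x y : EE n) {r : ℝ} (hr : 0 < r) : ‖r⁻¹ • (x - y)‖ = dist x y / r := by
  rw [norm_smul, norm_inv, Real.norm_eq_abs, abs_of_pos hr, inv_mul_eq_div, dist_eq_norm]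

lemma lap_const_sub {n : ℕ} (f : EE n → ℝ) (c : ℝ) (x : EE n) :
    lap n (fun x => c - f x) x = - lap n f x := by
  unfold lap
  rw [← Finset.sum_neg_distrib]
  refine Finset.sum_congr rfl fun i _ => ?_
  simp only [fderiv_const_sub]
  have : (fun y => (-fderiv ℝ f y) (EuclideanSpace.single i (1:ℝ))) = fun y => -(fderiv ℝ f y (EuclideanSpace.single i (1:ℝ))) := by
    ext; simp
  rw [this, fderiv_fun_neg]
  simp

lemma harnack {n : ℕ} {ψ : EE n → ℝ} {lam : ℝ} (hψ : ContDiff ℝ (⊤ : ℕ∞) ψ) (hl : 0 ≤ lam)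
    (heq : ∀ x, lap n ψ x = -lam * ψ x) {z : EE n} (hz : ψ z = 0) {ρ M : ℝ} (hρ : 0 < ρ)
    (hρl : 2 * lam * ρ^2 ≤ 1) (hM : ∀ x ∈ closedBall z (2*ρ), ψ x ≤ M) {y : EE n}
    (hy : y ∈ closedBall z (ρ/2)) : |ψ y| ≤ 11 * 4^n * M := by
  set u : EE n → ℝ := fun x => M - ψ x with hu
  have hus : ContDiff ℝ (⊤ : ℕ∞) u := contDiff_const.sub hψ
  have hul : ∀ x, lap n u x = lam * ψ x := fun x => by
    rw [hu, lap_const_sub, heq]; ring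
  have hM0 : 0 ≤ M := by
    have := hM z (mem_closedBall_self (by positivity)); rwa [hz] at this
  have h1 : AA u z (2*ρ) ≤ cg n * (u z + lam * M * (2*ρ)^2/2) :=
    AA_le hus z (by positivity) (by positivity) fun x hx => by
      rw [hul]; exact mul_le_mul_of_nonneg_left (hM x hx) hl
  have hyz : dist y z ≤ ρ/2 := hy
  have hsub : closedBall y (ρ/2) ⊆ closedBall z (2*ρ) := closedBall_subset_closedBall' (by linarith)
  have h2 : cg n * u y ≤ Real.exp (lam * (ρ/2)^2/2) * AA u y (ρ/2) := by
    refine AA_ge hus y (by positivity) hl (fun x hx => ?_) (fun x hx => ?_)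
    · simp only [hu]; linarith [hM x (hsub hx)]
    · rw [hul]; simp only [hu]; nlinarith
  have hexp : Real.exp (lam * (ρ/2)^2/2) ≤ 3 := by
    calc Real.exp (lam * (ρ/2)^2/2) ≤ Real.exp 1 := Real.exp_le_exp.mpr (by nlinarith)
      _ ≤ 3 := by linarith [Real.exp_one_lt_d9]
  have h3 : AA u y (ρ/2) ≤ 4^n * (16/9) * AA u z (2*ρ) := by
    unfold AA
    rw [cov u gg y (by positivity : 0 < ρ/2), cov u gg z (by positivity : 0 < 2*ρ)]
    have hI : ∫ x, u x * gg ((ρ/2)⁻¹ • (x - y)) ≤ (16/9) * ∫ x, u x * gg ((2*ρ)⁻¹ • (x - z)) := by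
      rw [← integral_const_mul]
      refine integral_mono (int_sgg hus.continuous y (by positivity)) ((int_sgg hus.continuous z (by positivity)).const_mul _) fun x => ?_
      dsimp only
      by_cases hx : dist x z < 2*ρ
      · have hux : 0 ≤ u x := by simp only [hu]; linarith [hM x (mem_closedBall.mpr hx.le)]
        by_cases hx2 : dist x y < ρ/2
        · have hxz : dist x z ≤ ρ := by linarith [dist_triangle x y z]
          have ha : gg ((ρ/2)⁻¹ • (x - y)) ≤ 6 := gg_le _
          have hb : 6 * (9/16) ≤ gg ((2*ρ)⁻¹ • (x - z)) := by
            unfold gg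
            rw [norm_sc _ _ (by positivity)]
            have hq : dist x z / (2*ρ) ≤ 1/2 := by
              rw [div_le_iff₀ (by positivity)]; linarith
            have hq0 : 0 ≤ dist x z / (2*ρ) := by positivity
            have : 3/4 ≤ max 0 (1 - (dist x z / (2*ρ))^2) := le_max_of_le_right (by nlinarith)
            nlinarith
          nlinarith
        · rw [gg_eq_zero (x := (ρ/2)⁻¹ • (x - y))]
          · have := gg_nonneg ((2*ρ)⁻¹ • (x - z))
            rw [mul_zero]
            exact mul_nonneg (by norm_num) (mul_nonneg hux this)
          · rw [norm_sc _ _ (by positivity), le_div_iff₀ (by positivity)]; linarith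
      · have hx' : 2*ρ ≤ dist x z := not_lt.mp hx
        rw [gg_eq_zero, gg_eq_zero]
        · simp
        · rw [norm_sc _ _ (by positivity), le_div_iff₀ (by positivity)]; linarith
        · rw [norm_sc _ _ (by positivity), le_div_iff₀ (by positivity)]; linarith [dist_triangle x y z]
    have hpow : ((ρ/2)^n)⁻¹ = 4^n * ((2*ρ)^n)⁻¹ := by
      have : (2*ρ)^n = 4^n * (ρ/2)^n := by rw [← mul_pow]; congr 1; ring
      rw [this]; field_simp
    rw [hpow]
    calc 4^n * ((2*ρ)^n)⁻¹ * ∫ x, u x * gg ((ρ/2)⁻¹ • (x - y)) ≤ 4^n * ((2*ρ)^n)⁻¹ * ((16/9) * ∫ x, u x * gg ((2*ρ)⁻¹ • (x - z))) := by gcongr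
      _ = _ := by ring
  have hcg := cg_pos n
  have huz : u z = M := by simp [hu, hz]
  rw [huz] at h1
  have h1' : AA u z (2*ρ) ≤ cg n * (2*M) := by
    refine h1.trans (mul_le_mul_of_nonneg_left ?_ hcg.le)
    nlinarith
  have hA0 : 0 ≤ AA u y (ρ/2) := by
    refine integral_nonneg fun x => ?_
    by_cases hx : ‖x‖ < 1
    · refine mul_nonneg ?_ (gg_nonneg x)
      simp only [hu]; linarith [hM _ (hsub (mem_cb (y := y) (by positivity : 0 ≤ ρ/2) le_rfl hx))]
    · simp [gg_eq_zero (not_lt.mp hx)]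
  have h4 : cg n * u y ≤ cg n * (11 * 4^n * M) := by
    have e1 : AA u y (ρ/2) ≤ 4^n * (16/9) * (cg n * (2*M)) := h3.trans (by gcongr)
    have e2 : cg n * u y ≤ 3 * AA u y (ρ/2) := h2.trans (by gcongr)
    have e3 : 0 ≤ 4^n * cg n * M := by positivity
    nlinarith
  have h5 : u y ≤ 11 * 4^n * M := le_of_mul_le_mul_left h4 hcg
  have h6 : (1:ℝ) ≤ 4^n := one_le_pow₀ (by norm_num)
  rw [abs_le]
  constructor
  · simp only [hu] at h5; linarith
  · have := hM y (hsub (mem_closedBall_self (by positivity)))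
    nlinarith

lemma pos_vol {n : ℕ} {ψ : EE n → ℝ} {lam : ℝ} (hψ : ContDiff ℝ (⊤ : ℕ∞) ψ) (hl : 0 ≤ lam)
    (heq : ∀ x, lap n ψ x = -lam * ψ x) {y : EE n} {δ : ℝ} (hδ : 0 < δ) (hpos : 0 < ψ y)
    (hlδ : 4 * lam * δ^2 ≤ 1) (hM : ∀ x ∈ closedBall y δ, ψ x ≤ 4 * ψ y) :
    cg n / 48 * δ^n ≤ volume.real ({x | 0 ≤ ψ x} ∩ ball y δ) := by
  have hcg := cg_pos n
  have h1 : AA (fun x => 0 - ψ x) y δ ≤ cg n * ((0 - ψ y) + lam * (4 * ψ y) * δ^2/2) :=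
    AA_le (contDiff_const.sub hψ) y hδ.le (by positivity) fun x hx => by
      rw [lap_const_sub, heq]
      have := mul_le_mul_of_nonneg_left (hM x hx) hl
      linarith
  have h2 : AA (fun x => 0 - ψ x) y δ = - AA ψ y δ := by
    unfold AA; rw [← integral_neg]; congr 1; ext x; ring
  rw [h2] at h1
  have h3 : cg n * (ψ y / 2) ≤ AA ψ y δ := by
    have : cg n * ((0 - ψ y) + lam * (4 * ψ y) * δ^2/2) ≤ cg n * (-(ψ y / 2)) := by
      refine mul_le_mul_of_nonneg_left ?_ hcg.le
      nlinarith
    linarith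
  set S := {x | 0 ≤ ψ x} ∩ ball y δ with hS
  have hSm : MeasurableSet S := (measurableSet_le measurable_const hψ.continuous.measurable).inter measurableSet_ball
  have hSf : volume S ≠ ⊤ := ((measure_mono Set.inter_subset_right).trans_lt measure_ball_lt_top).ne
  have h4 : AA ψ y δ ≤ (δ^n)⁻¹ * (24 * ψ y * volume.real S) := by
    unfold AA
    rw [cov ψ gg y hδ]
    refine mul_le_mul_of_nonneg_left ?_ (by positivity)
    have hi : ∫ x, S.indicator (fun _ => 24 * ψ y) x = 24 * ψ y * volume.real S := by
      rw [integral_indicator hSm, setIntegral_const]; simp [mul_comm]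
    rw [← hi]
    refine integral_mono (int_sgg hψ.continuous y hδ) ((integrable_indicator_iff hSm).mpr (integrableOn_const hSf)) fun x => ?_
    dsimp only
    have hg0 := gg_nonneg (δ⁻¹ • (x - y))
    by_cases hx : x ∈ S
    · rw [Set.indicator_of_mem hx]
      have := hM x (ball_subset_closedBall hx.2)
      have h0 : 0 ≤ ψ x := hx.1
      nlinarith [gg_le (δ⁻¹ • (x - y))]
    · rw [Set.indicator_of_notMem hx]
      by_cases hb : x ∈ ball y δ
      · have : ψ x < 0 := by
          by_contra hc; exact hx ⟨not_lt.mp hc, hb⟩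
        nlinarith
      · rw [gg_eq_zero, mul_zero]
        rw [norm_sc _ _ hδ, le_div_iff₀ hδ]
        simpa using hb
  have h5 : cg n * (ψ y / 2) * δ^n ≤ 24 * ψ y * volume.real S := by
    have := h3.trans h4
    rw [inv_mul_eq_div, le_div_iff₀ (by positivity)] at this
    exact this
  have h6 : ψ y * (cg n / 48 * δ^n) ≤ ψ y * volume.real S := by nlinarith
  exact le_of_mul_le_mul_left h6 hpos

lemma no_neg {n : ℕ} {ψ : EE n → ℝ} {lam : ℝ} (hψ : ContDiff ℝ (⊤ : ℕ∞) ψ) (hl : 0 ≤ lam)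
    (heq : ∀ x, lap n ψ x = -lam * ψ x) {y : EE n} {ρ : ℝ} (hρ : 0 < ρ)
    (hlρ : 43 * 2^n ≤ lam * ρ^2) : ∃ x ∈ closedBall y ρ, 0 ≤ ψ x := by
  by_contra! hneg
  set u : EE n → ℝ := fun x => 0 - ψ x with hu
  have hus : ContDiff ℝ (⊤ : ℕ∞) u := contDiff_const.sub hψ
  have hul : ∀ x, lap n u x = -lam * u x := fun x => by
    rw [hu, lap_const_sub, heq]; ring
  have hup : ∀ x ∈ closedBall y ρ, 0 < u x := fun x hx => by
    simp only [hu]; linarith [hneg x hx]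
  have hd : ∀ s, HasDerivAt (AA u y) (s * (-lam * BB u y s)) s := fun s => by
    refine (hasDerivAt_AA hus y s).congr_deriv ?_
    congr 1
    unfold BB
    rw [← integral_const_mul]
    congr 1; ext x; rw [hul]; ring
  have hB0 : ∀ s, 0 ≤ s → s ≤ ρ → 0 ≤ BB u y s := fun s h0 h1 => by
    refine integral_nonneg fun x => ?_
    by_cases hx : ‖x‖ < 1
    · exact mul_nonneg (hup _ (mem_cb h0 h1 hx)).le (GG_nonneg x)
    · simp [GG_eq_zero (not_lt.mp hx)]
  have hA0 : ∀ s, 0 ≤ s → s ≤ ρ → 0 < AA u y s := fun s h0 h1 => by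
    have hgc := continuous_gg (n := n)
    have huc := hus.continuous
    refine Continuous.integral_pos_of_hasCompactSupport_nonneg_nonzero (x := 0) (by fun_prop)
      (cs_of_zero fun x hx => by simp [gg_eq_zero hx]) (fun x => ?_) ?_
    · by_cases hx : ‖x‖ < 1
      · exact mul_nonneg (hup _ (mem_cb h0 h1 hx)).le (gg_nonneg x)
      · simp [gg_eq_zero (not_lt.mp hx)]
    · have := hup y (mem_closedBall_self hρ.le)
      simp [gg]; exact this.ne'
  have hanti : AntitoneOn (AA u y) (Set.Icc 0 ρ) := by
    refine antitoneOn_of_deriv_nonpos (convex_Icc 0 ρ)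
      (fun s _ => (hd s).continuousAt.continuousWithinAt)
      (fun s _ => (hd s).differentiableAt.differentiableWithinAt) ?_
    intro s hs
    rw [interior_Icc] at hs
    rw [(hd s).deriv]
    have := mul_nonneg hs.1.le (mul_nonneg hl (hB0 s hs.1.le hs.2.le))
    linarith
  set a := AA u y (ρ/2) with ha
  have ha0 : 0 < a := hA0 _ (by positivity) (by linarith)
  set κ : ℝ := (2^n)⁻¹ * (1/16) with hκ
  have hκ0 : 0 < κ := by positivity
  have hBA : ∀ s, 0 < s → s ≤ ρ → κ * a ≤ BB u y s := fun s h0 h1 => by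
    have e1 : a ≤ AA u y (s/2) := hanti ⟨by positivity, by linarith⟩ ⟨by positivity, by linarith⟩ (by linarith)
    have e2 : κ * AA u y (s/2) ≤ BB u y s := by
      unfold AA BB
      rw [cov u gg y (by positivity : 0 < s/2), cov u GG y h0]
      have hI : (1/16) * ∫ x, u x * gg ((s/2)⁻¹ • (x - y)) ≤ ∫ x, u x * GG (s⁻¹ • (x - y)) := by
        rw [← integral_const_mul]
        refine integral_mono ((int_sgg hus.continuous y (by positivity)).const_mul _) (int_sGG hus.continuous y h0) fun x => ?_
        dsimp only
        by_cases hx : dist x y < s/2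
        · have hux := hup x (mem_closedBall.mpr (by linarith))
          have hq : dist x y / s ≤ 1/2 := by rw [div_le_iff₀ h0]; linarith
          have hq0 : 0 ≤ dist x y / s := by positivity
          have hGG : 27/64 ≤ GG (s⁻¹ • (x - y)) := by
            unfold GG
            rw [norm_sc _ _ h0]
            have : 3/4 ≤ max 0 (1 - (dist x y / s)^2) := le_max_of_le_right (by nlinarith)
            calc (27/64 : ℝ) = (3/4)^3 := by norm_num
              _ ≤ _ := by gcongr
          have := gg_le ((s/2)⁻¹ • (x - y))
          nlinarith
        · rw [gg_eq_zero]
          · by_cases hx2 : dist x y < s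
            · have hux := hup x (mem_closedBall.mpr (by linarith))
              have := GG_nonneg (s⁻¹ • (x - y))
              simp; positivity
            · rw [GG_eq_zero]
              · simp
              · rw [norm_sc _ _ h0, le_div_iff₀ h0]; linarith
          · rw [norm_sc _ _ (by positivity), le_div_iff₀ (by positivity)]; linarith
      have hpow : ((s/2)^n)⁻¹ = 2^n * (s^n)⁻¹ := by
        rw [div_pow]; field_simp
      rw [hpow, hκ]
      calc (2^n)⁻¹ * (1/16) * (2^n * (s^n)⁻¹ * ∫ x, u x * gg ((s/2)⁻¹ • (x - y)))
          = (s^n)⁻¹ * ((1/16) * ∫ x, u x * gg ((s/2)⁻¹ • (x - y))) := by field_simp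
        _ ≤ _ := by gcongr
    exact (mul_le_mul_of_nonneg_left e1 hκ0.le).trans e2
  have hd2 : ∀ s, HasDerivAt (fun s => AA u y s + lam * κ * a * (s^2/2)) (s * (-lam * BB u y s) + lam * κ * a * s) s := by
    intro s
    have h1 : HasDerivAt (fun s : ℝ => s^2/2) s s := by
      have := (hasDerivAt_pow 2 s).div_const 2
      refine this.congr_deriv (by simp)
    exact (hd s).add (h1.const_mul _)
  have hanti2 : AntitoneOn (fun s => AA u y s + lam * κ * a * (s^2/2)) (Set.Icc (ρ/2) ρ) := by
    refine antitoneOn_of_deriv_nonpos (convex_Icc _ _)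
      (fun s _ => (hd2 s).continuousAt.continuousWithinAt)
      (fun s _ => (hd2 s).differentiableAt.differentiableWithinAt) ?_
    intro s hs
    rw [interior_Icc] at hs
    rw [(hd2 s).deriv]
    have hs0 : 0 < s := by linarith [hs.1]
    have := mul_nonneg (mul_nonneg hs0.le hl) (sub_nonneg.mpr (hBA s hs0 hs.2.le))
    nlinarith
  have hfin := hanti2 (Set.left_mem_Icc.mpr (by linarith)) (Set.right_mem_Icc.mpr (by linarith)) (by linarith : ρ/2 ≤ ρ)
  simp only at hfin
  have hAρ := hA0 ρ hρ.le le_rfl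
  have h7 : (43 * 2^n) * κ ≤ lam * ρ^2 * κ := mul_le_mul_of_nonneg_right hlρ hκ0.le
  have h8 : (43 * 2^n) * κ = 43/16 := by rw [hκ]; field_simp
  rw [h8] at h7
  have h9 := mul_le_mul_of_nonneg_right h7 ha0.le
  rw [← ha] at hfin
  nlinarith

lemma second_deriv_nonpos {φ : ℝ → ℝ} (hc : ContinuousAt φ 0) (hm : IsLocalMax φ 0) : deriv (deriv φ) 0 ≤ 0 := by
  by_contra! h
  have hmin := isLocalMin_of_deriv_deriv_pos h hm.deriv_eq_zero hc
  have : φ =ᶠ[nhds 0] fun _ => φ 0 := by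
    filter_upwards [hm, hmin] with s h1 h2 using le_antisymm h1 h2
  have h2 := this.deriv.deriv_eq
  simp at h2
  linarith

lemma max_pr {n : ℕ} (hn : 1 ≤ n) {ψ : EE n → ℝ} {lam : ℝ} (hψ : ContDiff ℝ (⊤ : ℕ∞) ψ) (hl : 0 < lam)
    (heq : ∀ x, lap n ψ x = -lam * ψ x) {z : EE n} {t M : ℝ} (ht : 0 < t)
    (hlt : 2 * lam * t^2 ≤ 1) (hM0 : 0 < M) (hM : ∀ x ∈ closedBall z t, ψ x ≤ M)
    {x₀ : EE n} (hx₀ : x₀ ∈ closedBall z t) (hx₀M : ψ x₀ = M) :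
    ∃ y, dist y z = t ∧ M / 2 ≤ ψ y := by
  have hn' : (1:ℝ) ≤ n := by exact_mod_cast hn
  set c : ℝ := lam * M / n with hc
  have hc0 : 0 < c := by positivity
  have hcn : c * n = lam * M := by rw [hc]; field_simp
  set w : EE n → ℝ := fun x => ψ x + c * ‖x - z‖^2 with hw
  have hψc := hψ.continuous
  have hwc : Continuous w := by fun_prop
  obtain ⟨y, hy, hmax⟩ := (isCompact_closedBall z t).exists_isMaxOn ⟨x₀, hx₀⟩ hwc.continuousOn
  have hyt : dist y z = t := by
    by_contra hne
    have hlt' : dist y z < t := lt_of_le_of_ne hy hne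
    have hloc : IsLocalMax w y := hmax.isLocalMax (closedBall_mem_nhds_of_mem hlt')
    have hi : ∀ i : Fin n, fderiv ℝ (fun y => fderiv ℝ ψ y (EuclideanSpace.single i (1:ℝ))) y
        (EuclideanSpace.single i (1:ℝ)) + 2 * c ≤ 0 := by
      intro i
      set e : EE n := EuclideanSpace.single i (1:ℝ) with he
      have hen : ‖e‖ = 1 := by simp [he]
      set D : EE n → ℝ := fun y => fderiv ℝ ψ y e with hD
      have hline : ∀ s : ℝ, HasDerivAt (fun s : ℝ => y + s • e) e s := fun s => by
        simpa using ((hasDerivAt_id s).smul_const e).const_add y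
      set φ : ℝ → ℝ := fun s => w (y + s • e) with hφ
      have hφ' : φ = fun s => ψ (y + s • e) + c * (‖y - z‖^2 + 2 * s * inner ℝ (y - z) e + s^2) := by
        ext s
        simp only [hφ, hw]
        congr 2
        have : y + s • e - z = (y - z) + s • e := by abel
        rw [this, norm_add_sq_real, norm_smul, hen, inner_smul_right]
        simp; ring
      have hd1 : ∀ s, HasDerivAt φ (D (y + s • e) + c * (2 * inner ℝ (y - z) e + 2 * s)) s := by
        intro s
        rw [hφ']
        have h1 : HasDerivAt (fun s : ℝ => ψ (y + s • e)) (D (y + s • e)) s :=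
          (hψ.differentiable (by simp) _).hasFDerivAt.comp_hasDerivAt s (hline s)
        have h2 : HasDerivAt (fun s : ℝ => c * (‖y - z‖^2 + 2 * s * inner ℝ (y - z) e + s^2)) (c * (2 * inner ℝ (y - z) e + 2 * s)) s := by
          refine HasDerivAt.const_mul c ?_
          have h3 : HasDerivAt (fun s : ℝ => 2 * s * inner ℝ (y - z) e) (2 * inner ℝ (y - z) e) s := by
            simpa using ((hasDerivAt_id s).const_mul 2).mul_const (inner ℝ (y - z) e)
          have h4 := (h3.const_add (‖y - z‖^2)).add (hasDerivAt_pow 2 s)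
          exact h4.congr_deriv (by simp)
        exact h1.add h2
      have hd2 : HasDerivAt (deriv φ) (fderiv ℝ D y e + 2 * c) 0 := by
        have : deriv φ = fun s => D (y + s • e) + c * (2 * inner ℝ (y - z) e + 2 * s) := by
          ext s; exact (hd1 s).deriv
        rw [this]
        have h0 : HasFDerivAt D (fderiv ℝ D y) (y + (0:ℝ) • e) := by
          simpa using ((contDiff_D hψ e).differentiable (by simp) y).hasFDerivAt
        have h1 : HasDerivAt (fun s : ℝ => D (y + s • e)) (fderiv ℝ D y e) 0 := by
          have h00 := HasFDerivAt.comp_hasDerivAt (l := D) (f := fun s : ℝ => y + s • e) (0:ℝ) h0 (hline 0)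
          exact h00
        have h2 : HasDerivAt (fun s : ℝ => c * (2 * inner ℝ (y - z) e + 2 * s)) (2 * c) 0 := by
          have := (((hasDerivAt_id (0:ℝ)).const_mul 2).const_add (2 * inner ℝ (y - z) e)).const_mul c
          refine this.congr_deriv (by ring)
        exact h1.add h2
      have hφm : IsLocalMax φ 0 := by
        have hct : Tendsto (fun s : ℝ => y + s • e) (nhds 0) (nhds y) := by
          have : Continuous (fun s : ℝ => y + s • e) := by fun_prop
          simpa using this.tendsto 0
        have := hct.eventually hloc
        filter_upwards [this] with s hs
        simpa [hφ] using hs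
      have := second_deriv_nonpos (hd1 0).continuousAt hφm
      rwa [hd2.deriv] at this
    have hsum := Finset.sum_nonpos fun i (_ : i ∈ Finset.univ) => hi i
    rw [Finset.sum_add_distrib] at hsum
    have hle := heq y
    unfold lap at hle
    rw [hle] at hsum
    simp at hsum
    have := mul_le_mul_of_nonneg_left (hM y hy) hl.le
    have : 0 < lam * M := by positivity
    nlinarith
  refine ⟨y, hyt, ?_⟩
  have h1 : w x₀ ≤ w y := hmax hx₀
  simp only [hw] at h1
  rw [hx₀M, ← dist_eq_norm, ← dist_eq_norm, hyt] at h1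
  have h2 : c * t^2 ≤ M/2 := by
    have : c ≤ lam * M := by rw [← hcn]; nlinarith
    nlinarith [sq_nonneg t]
  nlinarith [mul_nonneg hc0.le (sq_nonneg (dist x₀ z))]


def Dm {n : ℕ} (ψ : EE n → ℝ) (x : EE n) (s : ℝ) : ℝ := sSup ((fun y => (ψ y)^2) '' ball x s)

lemma Dm_bdd {n : ℕ} {ψ : EE n → ℝ} (hψ : Continuous ψ) (x : EE n) (s : ℝ) :
    BddAbove ((fun y => (ψ y)^2) '' ball x s) :=
  ((isCompact_closedBall x s).bddAbove_image (by fun_prop : Continuous fun y => (ψ y)^2).continuousOn).mono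
    (Set.image_mono ball_subset_closedBall)

lemma le_Dm {n : ℕ} {ψ : EE n → ℝ} (hψ : Continuous ψ) {x y : EE n} {s : ℝ} (hy : y ∈ ball x s) :
    (ψ y)^2 ≤ Dm ψ x s := le_csSup (Dm_bdd hψ x s) ⟨y, hy, rfl⟩

lemma Dm_le {n : ℕ} {ψ : EE n → ℝ} {x : EE n} {s C : ℝ} (hs : 0 < s)
    (h : ∀ y ∈ ball x s, (ψ y)^2 ≤ C) : Dm ψ x s ≤ C := by
  refine csSup_le ((nonempty_ball.mpr hs).image _) ?_
  rintro _ ⟨y, hy, rfl⟩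
  exact h y hy

lemma Dm_mono {n : ℕ} {ψ : EE n → ℝ} (hψ : Continuous ψ) {x : EE n} {s t : ℝ} (hs : 0 < s) (hst : s ≤ t) :
    Dm ψ x s ≤ Dm ψ x t := Dm_le hs fun _ hy => le_Dm hψ (ball_subset_ball hst hy)

lemma doubling {n : ℕ} {ψ : EE n → ℝ} (hψ : Continuous ψ) {x : EE n} {s N : ℝ} (hs : 0 < s)
    (hN : Real.log (Dm ψ x (2*s) / Dm ψ x s) ≤ N) (hp : 0 < Dm ψ x s) :
    Dm ψ x (2*s) ≤ Real.exp N * Dm ψ x s := by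
  have h2 : 0 < Dm ψ x (2*s) := hp.trans_le (Dm_mono hψ hs (by linarith))
  rw [Real.log_le_iff_le_exp (by positivity), div_le_iff₀ hp] at hN
  exact hN

lemma uc_step {n : ℕ} {ψ : EE n → ℝ} (hψ : Continuous ψ) {s₀ N : ℝ}
    (hN : ∀ x s, 0 < s → s ≤ s₀ → Real.log (Dm ψ x (2*s) / Dm ψ x s) ≤ N)
    {x : EE n} {s : ℝ} (hs : 0 < s) (h0 : ∀ y ∈ ball x s, ψ y = 0) : ∀ y ∈ ball x s₀, ψ y = 0 := by
  by_contra! hcon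
  obtain ⟨y₁, hy₁, hne₁⟩ := hcon
  set T : Set ℝ := (fun y => dist y x) '' {y | ψ y ≠ 0} with hT
  have hTb : BddBelow T := ⟨0, by rintro _ ⟨y, _, rfl⟩; exact dist_nonneg⟩
  have hTn : T.Nonempty := ⟨_, y₁, hne₁, rfl⟩
  set d := sInf T with hd
  have hds : s ≤ d := by
    refine le_csInf hTn ?_
    rintro _ ⟨y, hy, rfl⟩
    by_contra hc
    exact hy (h0 y (not_le.mp hc))
  have hd0 : 0 < d := hs.trans_le hds
  have hd1 : d < s₀ := (csInf_le hTb ⟨y₁, hne₁, rfl⟩).trans_lt hy₁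
  have hzb : ∀ y ∈ ball x d, ψ y = 0 := by
    intro y hy
    by_contra hc
    exact absurd (csInf_le hTb ⟨y, hc, rfl⟩) (not_le.mpr hy)
  have hzc : ∀ y ∈ closedBall x d, ψ y = 0 := by
    intro y hy
    rw [← closure_ball x hd0.ne'] at hy
    have hcl : IsClosed {y | ψ y = 0} := isClosed_eq hψ continuous_const
    exact closure_minimal (fun y hy => hzb y hy) hcl hy
  have hex : ∀ t, d < t → ∃ y ∈ ball x t, ψ y ≠ 0 := by
    intro t ht
    obtain ⟨_, ⟨y, hy, rfl⟩, hlt⟩ := exists_lt_of_csInf_lt hTn ht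
    exact ⟨y, hlt, hy⟩
  obtain ⟨y₂, hy₂, hne₂⟩ := hex (2*d) (by linarith)
  have hp2 : 0 < (ψ y₂)^2 := by positivity
  set ε : ℝ := Real.exp (-N) * (ψ y₂)^2 / 2 with hε
  have hε0 : 0 < ε := by positivity
  have hU : IsOpen {y | (ψ y)^2 < ε} := isOpen_lt (by fun_prop) continuous_const
  obtain ⟨δ, hδ, hsub⟩ := (isCompact_closedBall x d).exists_thickening_subset_open hU
    (fun y hy => by simp [hzc y hy, hε0])
  rw [thickening_closedBall hδ hd0.le] at hsub
  set t := min (δ + d) s₀ with ht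
  have htd : d < t := lt_min (by linarith) hd1
  have ht0 : 0 < t := hd0.trans htd
  have hDt : Dm ψ x t ≤ ε := Dm_le ht0 fun y hy =>
    le_of_lt (hsub (ball_subset_ball (min_le_left _ _) hy))
  obtain ⟨y₃, hy₃, hne₃⟩ := hex t htd
  have hDp : 0 < Dm ψ x t := lt_of_lt_of_le (by positivity) (le_Dm hψ hy₃)
  have hdb := doubling hψ ht0 (hN x t ht0 (min_le_right _ _)) hDp
  have h2 : (ψ y₂)^2 ≤ Dm ψ x (2*t) := le_Dm hψ (ball_subset_ball (by linarith) hy₂)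
  have h3 : (ψ y₂)^2 ≤ Real.exp N * ε := h2.trans (hdb.trans (by gcongr))
  rw [hε, Real.exp_neg] at h3
  have : Real.exp N * ((Real.exp N)⁻¹ * ψ y₂ ^ 2 / 2) = ψ y₂^2/2 := by
    field_simp
  linarith

lemma Dm_pos {n : ℕ} {ψ : EE n → ℝ} (hψ : Continuous ψ) {s₀ N : ℝ} (hs₀ : 0 < s₀)
    (hN : ∀ x s, 0 < s → s ≤ s₀ → Real.log (Dm ψ x (2*s) / Dm ψ x s) ≤ N)
    (hne : ∃ x, ψ x ≠ 0) (x : EE n) {s : ℝ} (hs : 0 < s) : 0 < Dm ψ x s := by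
  by_contra hcon
  have h0 : ∀ y ∈ ball x s, ψ y = 0 := by
    intro y hy
    have := (le_Dm hψ hy).trans (not_lt.mp hcon)
    nlinarith [sq_nonneg (ψ y), pow_eq_zero_iff (two_ne_zero) (a := ψ y)|>.mp (le_antisymm this (sq_nonneg _))]
  set E : Set (EE n) := {x | ∀ y ∈ ball x s₀, ψ y = 0} with hE
  have hxE : x ∈ E := uc_step hψ hN hs h0
  have hstep : ∀ a ∈ E, ∀ b ∈ ball a s₀, b ∈ E := by
    intro a ha b hb
    obtain ⟨ε, hε, hsub⟩ := isOpen_iff.mp isOpen_ball b hb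
    exact uc_step hψ hN hε fun y hy => ha y (hsub hy)
  have hop : IsOpen E := isOpen_iff.mpr fun a ha => ⟨s₀, hs₀, hstep a ha⟩
  have hcl : IsClosed E := by
    refine isOpen_compl_iff.mp (Metric.isOpen_iff.mpr ?_)
    intro a ha
    refine ⟨s₀, hs₀, fun b hb hbE => ha (hstep b hbE a ?_)⟩
    rw [mem_ball_comm]; exact hb
  have huniv : E = Set.univ := IsClopen.eq_univ ⟨hcl, hop⟩ ⟨x, hxE⟩
  obtain ⟨w, hw⟩ := hne
  have hwE : w ∈ E := by rw [huniv]; trivial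
  exact hw (hwE w (mem_ball_self hs₀))

lemma N_ge_one {n : ℕ} {ψ : EE n → ℝ} (hψ : ContDiff ℝ (⊤ : ℕ∞) ψ) {s₀ N : ℝ} (hs₀ : 0 < s₀)
    {z : EE n} (hz : ψ z = 0) (hp : ∀ s, 0 < s → 0 < Dm ψ z s)
    (hD : ∀ s, 0 < s → s ≤ s₀ → Dm ψ z (2*s) ≤ Real.exp N * Dm ψ z s) : 1 ≤ N := by
  by_contra! hN
  have hO := (hψ.differentiable (by simp) z).hasFDerivAt.isBigO_sub
  obtain ⟨C, hC⟩ := hO.bound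
  obtain ⟨η, hη, hηb⟩ := Metric.eventually_nhds_iff_ball.mp hC
  set t := min s₀ η with ht
  have ht0 : 0 < t := lt_min hs₀ hη
  have hup : ∀ s, 0 < s → s ≤ t → Dm ψ z s ≤ C^2 * s^2 := by
    intro s hs hst
    refine Dm_le hs fun y hy => ?_
    have h1 := hηb y (ball_subset_ball (hst.trans (min_le_right _ _)) hy)
    rw [hz, sub_zero, Real.norm_eq_abs, ← dist_eq_norm] at h1
    have h2 : dist y z < s := hy
    calc ψ y^2 = |ψ y|^2 := (sq_abs _).symm
      _ ≤ (C * dist y z)^2 := by gcongr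
      _ = C^2 * (dist y z)^2 := by ring
      _ ≤ C^2 * s^2 := by gcongr
  have hlow : ∀ k : ℕ, Dm ψ z t ≤ Real.exp 1 ^ k * Dm ψ z (t / 2^k) := by
    intro k
    induction k with
    | zero => simp
    | succ k ih =>
      have h1 := hD (t/2^(k+1)) (by positivity) (by
        refine le_trans (div_le_self ht0.le (one_le_pow₀ (by norm_num))) (min_le_left _ _))
      have h2 : 2 * (t/2^(k+1)) = t/2^k := by rw [pow_succ]; field_simp
      rw [h2] at h1
      have h3 : Real.exp N ≤ Real.exp 1 := Real.exp_le_exp.mpr hN.le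
      have h4 := hp (t/2^(k+1)) (by positivity)
      calc Dm ψ z t ≤ Real.exp 1 ^ k * Dm ψ z (t / 2^k) := ih
        _ ≤ Real.exp 1 ^ k * (Real.exp 1 * Dm ψ z (t/2^(k+1))) := by
            gcongr
            exact h1.trans (by gcongr)
        _ = _ := by ring
  have hq : (1:ℝ) < 4/3 := by norm_num
  obtain ⟨k, hk⟩ := pow_unbounded_of_one_lt (C^2 * t^2 / Dm ψ z t) hq
  have hDt := hp t ht0
  rw [div_lt_iff₀ hDt] at hk
  have h1 := hlow k
  have h2 := hup (t/2^k) (by positivity) (div_le_self ht0.le (one_le_pow₀ (by norm_num)))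
  have h3 : Real.exp 1 ^ k ≤ 3^k := by
    gcongr; linarith [Real.exp_one_lt_d9]
  have h4 : Dm ψ z t ≤ 3^k * (C^2 * (t/2^k)^2) := by
    refine h1.trans ?_
    have := (hp (t/2^k) (by positivity)).le
    gcongr
  have h5 : (4/3:ℝ)^k * (3^k * (C^2 * (t/2^k)^2)) = C^2 * t^2 := by
    have e1 : (4/3:ℝ)^k * 3^k = 4^k := by rw [← mul_pow]; norm_num
    have e2 : (t/2^k)^2 = t^2 / 4^k := by rw [div_pow, ← pow_mul, mul_comm k 2, pow_mul]; norm_num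
    rw [e2, ← mul_assoc, e1]; field_simp
  have h6 := mul_le_mul_of_nonneg_left h4 (by positivity : 0 ≤ (4/3:ℝ)^k)
  rw [h5] at h6
  linarith

def CK (n : ℕ) : ℝ := 2 * (Real.log (11 * 4^n) + 2) / Real.log 2

lemma CK_pos (n : ℕ) : 0 < CK n := by
  have h1 : 0 ≤ Real.log (11 * 4^n) := Real.log_nonneg (by
    have : (1:ℝ) ≤ 4^n := one_le_pow₀ (by norm_num)
    linarith)
  have h2 : 0 < Real.log 2 := Real.log_pos (by norm_num)
  unfold CK; positivity

lemma count_bad (a : ℕ → ℝ) (hmono : ∀ k, a k ≤ a (k+1)) (k : ℕ) :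
    2 ^ ((Finset.range k).filter fun j => 2 * a j < a (j+1)).card * a 0 ≤ a k := by
  induction k with
  | zero => simp
  | succ k ih =>
    rw [Finset.range_add_one, Finset.filter_insert]
    split_ifs with h
    · rw [Finset.card_insert_of_notMem (by simp), pow_succ]
      linarith
    · exact ih.trans (hmono k)

set_option maxHeartbeats 2000000 in
lemma small {n : ℕ} (hn : 1 ≤ n) {ψ : EE n → ℝ} {lam : ℝ} (hψ : ContDiff ℝ (⊤ : ℕ∞) ψ) (hl : 0 < lam)
    (heq : ∀ x, lap n ψ x = -lam * ψ x) {z : EE n} (hz : ψ z = 0) {s₀ N : ℝ}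
    (hls : lam * s₀^2 ≤ 1/4) (hN1 : 1 ≤ N)
    (hp : ∀ s, 0 < s → 0 < Dm ψ z s)
    (hD : ∀ s, 0 < s → s ≤ s₀ → Dm ψ z (2*s) ≤ Real.exp N * Dm ψ z s) {r : ℝ} (hr : 0 < r)
    (hrs : 2 * r ≤ s₀) :
    cg n / 48 / (2 * 2^n) / (CK n + 1)^(n-1) * r^n / N^(n-1) ≤
      volume.real ({x | 0 ≤ ψ x} ∩ ball z (3*r)) := by
  have hψc := hψ.continuous
  have hlr : 16 * (lam * r^2) ≤ 1 := by
    have : (2*r)^2 ≤ s₀^2 := by gcongr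
    nlinarith
  have hCK := CK_pos n
  set K := ⌈CK n * N⌉₊ with hK
  have hK1 : CK n * N ≤ K := Nat.le_ceil _
  have hK2 : (K:ℝ) ≤ (CK n + 1) * N := by
    have := (Nat.ceil_lt_add_one (by positivity : 0 ≤ CK n * N)).le
    rw [← hK] at this; linarith
  have hK0 : (0:ℝ) < K := lt_of_lt_of_le (by positivity) hK1
  set t : ℕ → ℝ := fun k => r * (1 + k / K) with ht
  have htr : ∀ k, r ≤ t k := fun k => by
    have : (0:ℝ) ≤ k / K := by positivity
    simp only [ht]; nlinarith
  have ht0 : ∀ k, 0 < t k := fun k => hr.trans_le (htr k)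
  have hts : ∀ k, t (k+1) = t k + r / K := fun k => by
    simp only [ht]; push_cast; ring
  have ht2 : ∀ k, k ≤ K → t k ≤ 2 * r := fun k hk => by
    have : (k:ℝ) / K ≤ 1 := by rw [div_le_one hK0]; exact_mod_cast hk
    simp only [ht]; nlinarith
  have hex : ∀ k, ∃ x ∈ closedBall z (t k), ∀ y ∈ closedBall z (t k), ψ y ≤ ψ x := fun k => by
    obtain ⟨x, hx, hm⟩ := (isCompact_closedBall z (t k)).exists_isMaxOn
      (nonempty_closedBall.mpr (ht0 k).le) hψc.continuousOn
    exact ⟨x, hx, fun y hy => hm hy⟩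
  choose x hx hxm using hex
  set a : ℕ → ℝ := fun k => ψ (x k) with ha
  have hrK : 0 < r / K := by positivity
  have hmono : ∀ k, a k ≤ a (k+1) := fun k =>
    hxm (k+1) _ (closedBall_subset_closedBall (by rw [hts]; linarith) (hx k))
  set CH : ℝ := 11 * 4^n with hCH
  have hCH1 : 1 ≤ CH := by
    have : (1:ℝ) ≤ 4^n := one_le_pow₀ (by norm_num)
    rw [hCH]; linarith
  have ht00 : t 0 = r := by simp [ht]
  have ha00 : 0 ≤ a 0 := by
    have := hxm 0 z (mem_closedBall_self (ht0 0).le)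
    rwa [hz] at this
  have hDa : Dm ψ z (r/4) ≤ (CH * a 0)^2 := by
    refine Dm_le (by positivity) fun y hy => ?_
    have := harnack hψ hl.le heq hz (ρ := r/2) (M := a 0) (by positivity) (by nlinarith) (fun w hw => by
      apply hxm 0; rw [ht00]; convert hw using 2; ring) (y := y) (by
        apply ball_subset_closedBall; convert hy using 2; ring)
    rw [← sq_abs]
    gcongr
  have ha0 : 0 < a 0 := by
    refine lt_of_le_of_ne ha00 fun h => ?_
    rw [← h] at hDa
    have := hp (r/4) (by positivity)
    simp at hDa
    linarith
  have hak : ∀ k, a 0 ≤ a k := fun k => by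
    induction k with
    | zero => exact le_rfl
    | succ k ih => exact ih.trans (hmono k)
  have haK : a K ≤ Real.exp (2*N) * (CH * a 0) := by
    have h1 : a K ^2 ≤ Dm ψ z (2*(2*(2*(2*(r/4))))) := by
      refine le_Dm hψc ?_
      have h : dist (x K) z ≤ t K := hx K
      have := ht2 K le_rfl
      rw [mem_ball]; linarith
    have hD1 := hD (r/4) (by positivity) (by linarith)
    have hD2 := hD (2*(r/4)) (by positivity) (by linarith)
    have hD3 := hD (2*(2*(r/4))) (by positivity) (by linarith)
    have hD4 := hD (2*(2*(2*(r/4)))) (by positivity) (by linarith)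
    have he := Real.exp_pos N
    have h2 : a K ^ 2 ≤ Real.exp N * (Real.exp N * (Real.exp N * (Real.exp N * (CH * a 0)^2))) :=
      h1.trans (hD4.trans (mul_le_mul_of_nonneg_left (hD3.trans (mul_le_mul_of_nonneg_left
        (hD2.trans (mul_le_mul_of_nonneg_left (hD1.trans (mul_le_mul_of_nonneg_left hDa he.le)) he.le)) he.le)) he.le))
    have h3 : Real.exp (2*N) = Real.exp N * Real.exp N := by rw [← Real.exp_add]; congr 1; ring
    refine (pow_le_pow_iff_left₀ (ha00.trans (hak K)) (by positivity) two_ne_zero).mp ?_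
    rw [h3]
    calc a K ^2 ≤ _ := h2
      _ = _ := by ring
  set Bd := (Finset.range K).filter fun j => 2 * a j < a (j+1) with hBd
  set Gd := (Finset.range K).filter fun j => ¬ (2 * a j < a (j+1)) with hGd
  have hcard : Bd.card + Gd.card = K := by
    rw [hBd, hGd, Finset.card_filter_add_card_filter_not, Finset.card_range]
  have hb := count_bad a hmono K
  rw [← hBd] at hb
  have hb2 : (2:ℝ)^Bd.card ≤ Real.exp (2*N) * CH := by
    have : 2 ^ Bd.card * a 0 ≤ (Real.exp (2*N) * CH) * a 0 := by linarith
    exact le_of_mul_le_mul_right this ha0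
  have hlog2 : 0 < Real.log 2 := Real.log_pos (by norm_num)
  have hb3 : (Bd.card : ℝ) * Real.log 2 ≤ 2 * N + Real.log CH := by
    have := Real.log_le_log (by positivity) hb2
    rwa [Real.log_pow, Real.log_mul (Real.exp_pos _).ne' (by positivity), Real.log_exp] at this
  have hb4 : (Bd.card : ℝ) ≤ K / 2 := by
    have hlc : 0 ≤ Real.log CH := Real.log_nonneg hCH1
    have e1 : CK n * Real.log 2 = 2 * (Real.log CH + 2) := by
      unfold CK; rw [hCH]; field_simp
    have e2 : (Bd.card : ℝ) * Real.log 2 ≤ (CK n * N / 2) * Real.log 2 := by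
      have : (CK n * N / 2) * Real.log 2 = (Real.log CH + 2) * N := by
        calc (CK n * N / 2) * Real.log 2 = (CK n * Real.log 2) * N / 2 := by ring
          _ = _ := by rw [e1]; ring
      rw [this]; nlinarith
    have := le_of_mul_le_mul_right e2 hlog2
    linarith
  have hg : (K:ℝ)/2 ≤ Gd.card := by
    have : (Bd.card : ℝ) + Gd.card = K := by exact_mod_cast hcard
    linarith
  have hyex : ∀ k, ∃ y, k ∈ Gd → dist y z = t k ∧ a k / 2 ≤ ψ y := fun k => by
    by_cases hk : k ∈ Gd
    · have hkK : k < K := by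
        have := (Finset.mem_filter.mp hk).1; simpa using this
      obtain ⟨y, h1, h2⟩ := max_pr hn hψ hl heq (ht0 k) (by
        have := ht2 k hkK.le
        have h3 : t k ^2 ≤ (2*r)^2 := by have := (ht0 k).le; gcongr
        nlinarith) (ha0.trans_le (hak k)) (hxm k) (hx k) rfl
      exact ⟨y, fun _ => ⟨h1, h2⟩⟩
    · exact ⟨z, fun h => absurd h hk⟩
  choose y hy using hyex
  set δ := r / K / 2 with hδ
  have hδ0 : 0 < δ := by positivity
  have hK1' : (1:ℝ) ≤ K := by
    have : 0 < K := by exact_mod_cast hK0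
    exact_mod_cast this
  have hδr : δ ≤ r / 2 := by
    have : r / K ≤ r := div_le_self hr.le hK1'
    rw [hδ]; linarith
  have hv : ∀ k ∈ Gd, cg n / 48 * δ^n ≤ volume.real ({x | 0 ≤ ψ x} ∩ ball (y k) δ) := by
    intro k hk
    obtain ⟨h1, h2⟩ := hy k hk
    have hkg := (Finset.mem_filter.mp hk).2
    have hap := ha0.trans_le (hak k)
    refine pos_vol hψ hl.le heq hδ0 (by linarith) (by
      have : δ^2 ≤ (r/2)^2 := by gcongr
      nlinarith) fun w hw => ?_
    have hw' : w ∈ closedBall z (t (k+1)) := by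
      refine closedBall_subset_closedBall' ?_ hw
      rw [h1, hts, hδ]; linarith
    have := hxm (k+1) w hw'
    have h4 : a (k+1) ≤ 2 * a k := not_lt.mp hkg
    simp only [ha] at h2 h4
    linarith
  have hdisj : (Gd : Set ℕ).PairwiseDisjoint fun k => {x | 0 ≤ ψ x} ∩ ball (y k) δ := by
    intro k hk l hl' hkl
    refine Disjoint.mono Set.inter_subset_right Set.inter_subset_right (ball_disjoint_ball ?_)
    have h1 := (hy k hk).1
    have h2 := (hy l hl').1
    have h3 : |t k - t l| ≤ dist (y k) (y l) := by
      rw [← h1, ← h2]; exact abs_dist_sub_le _ _ _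
    refine le_trans ?_ h3
    have h4 : t k - t l = (r/K) * ((k:ℝ) - l) := by simp only [ht]; ring
    rw [h4, abs_mul, abs_of_pos hrK]
    have h5 : (1:ℝ) ≤ |(k:ℝ) - l| := by
      have : (1:ℤ) ≤ |(k:ℤ) - l| := Int.one_le_abs (sub_ne_zero.mpr (by exact_mod_cast hkl))
      exact_mod_cast this
    rw [hδ]; nlinarith
  have hmeas : ∀ k ∈ Gd, MeasurableSet ({x | 0 ≤ ψ x} ∩ ball (y k) δ) := fun k _ =>
    (measurableSet_le measurable_const hψc.measurable).inter measurableSet_ball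
  have hfin : ∀ c (s : ℝ), volume ({x | 0 ≤ ψ x} ∩ ball (c : EE n) s) ≠ ⊤ := fun c s =>
    ((measure_mono Set.inter_subset_right).trans_lt measure_ball_lt_top).ne
  have hsum : volume.real (⋃ k ∈ Gd, {x | 0 ≤ ψ x} ∩ ball (y k) δ) =
      ∑ k ∈ Gd, volume.real ({x | 0 ≤ ψ x} ∩ ball (y k) δ) :=
    measureReal_biUnion_finset hdisj hmeas (fun k _ => hfin _ _)
  have hle : volume.real (⋃ k ∈ Gd, {x | 0 ≤ ψ x} ∩ ball (y k) δ) ≤ volume.real ({x | 0 ≤ ψ x} ∩ ball z (3*r)) := by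
    refine measureReal_mono ?_ (hfin _ _)
    refine Set.iUnion₂_subset fun k hk => Set.inter_subset_inter_right _ (ball_subset_ball' ?_)
    have hkK : k < K := by
      have := (Finset.mem_filter.mp hk).1; simpa using this
    rw [(hy k hk).1]
    linarith [ht2 k hkK.le]
  have hcg := cg_pos n
  have hs2 : (K:ℝ)/2 * (cg n / 48 * δ^n) ≤ volume.real ({x | 0 ≤ ψ x} ∩ ball z (3*r)) := by
    calc (K:ℝ)/2 * (cg n / 48 * δ^n) ≤ Gd.card * (cg n / 48 * δ^n) := by gcongr
      _ = ∑ k ∈ Gd, cg n / 48 * δ^n := by simp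
      _ ≤ ∑ k ∈ Gd, volume.real ({x | 0 ≤ ψ x} ∩ ball (y k) δ) := Finset.sum_le_sum hv
      _ ≤ _ := by rw [← hsum]; exact hle
  refine le_trans ?_ hs2
  obtain ⟨m, rfl⟩ : ∃ m, n = m + 1 := ⟨n - 1, by omega⟩
  simp only [Nat.add_sub_cancel]
  have e1 : (K:ℝ)/2 * (cg (m+1) / 48 * δ^(m+1)) = cg (m+1) / 48 / (2 * 2^(m+1)) * r^(m+1) / (K:ℝ)^m := by
    rw [hδ, div_pow, div_pow, pow_succ (K:ℝ) m]; field_simp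
  have e2 : cg (m+1) / 48 / (2 * 2^(m+1)) / (CK (m+1) + 1)^m * r^(m+1) / N^m =
      cg (m+1) / 48 / (2 * 2^(m+1)) * r^(m+1) / ((CK (m+1) + 1) * N)^m := by
    rw [mul_pow]; field_simp
  rw [e1, e2]
  gcongr


def Qc (n : ℕ) : ℝ := 172 * 2^n
def om (n : ℕ) : ℝ := volume.real (ball (0 : EE n) 1)
def c1 (n : ℕ) : ℝ :=
  min (cg n / 48 / (2 * 2^n) / (CK n + 1)^(n-1) / (12 * Qc n)^n) (om n / 2^n)

lemma Qc_ge (n : ℕ) : 1 ≤ Qc n := by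
  have : (1:ℝ) ≤ 2^n := one_le_pow₀ (by norm_num)
  unfold Qc; linarith
lemma om_pos (n : ℕ) : 0 < om n :=
  ENNReal.toReal_pos (measure_ball_pos volume _ one_pos).ne' measure_ball_lt_top.ne
lemma c1_pos (n : ℕ) : 0 < c1 n := by
  have h1 := cg_pos n
  have h2 := CK_pos n
  have h3 := Qc_ge n
  have h4 := om_pos n
  unfold c1
  exact lt_min (by positivity) (by positivity)

lemma vol_ball {n : ℕ} (x : EE n) {r : ℝ} (hr : 0 < r) :
    volume.real (ball x r) = r^n * om n := by
  unfold om Measure.real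
  rw [Measure.addHaar_ball_of_pos _ _ hr, ENNReal.toReal_mul, finrank_euclideanSpace, Fintype.card_fin,
    ENNReal.toReal_ofReal (by positivity)]

lemma fin_int {n : ℕ} (P : Set (EE n)) (c : EE n) (s : ℝ) : volume (P ∩ ball c s) ≠ ⊤ :=
  ((measure_mono Set.inter_subset_right).trans_lt measure_ball_lt_top).ne

lemma local_lb {n : ℕ} (hn : 1 ≤ n) {ψ : EE n → ℝ} {lam : ℝ} (hψ : ContDiff ℝ (⊤ : ℕ∞) ψ) (hl : 0 < lam)
    (heq : ∀ x, lap n ψ x = -lam * ψ x) {L N : ℝ} (hL : 0 < L) (hlL : lam * L^2 = 1) (hN1 : 1 ≤ N)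
    (hp : ∀ x s, 0 < s → 0 < Dm ψ x s)
    (hD : ∀ x s, 0 < s → s ≤ 1/2 * L → Dm ψ x (2*s) ≤ Real.exp N * Dm ψ x s) {p : EE n} {R : ℝ} (hR : 0 < R)
    (hRL : R ≤ 2 * Qc n * L) (hz : ∃ z ∈ ball p (R/2), ψ z = 0) :
    c1 n * R^n / N^(n-1) ≤ volume.real ({x | 0 ≤ ψ x} ∩ ball p R) := by
  obtain ⟨z, hzb, hz⟩ := hz
  have hQ := Qc_ge n
  have hQ0 : 0 < Qc n := by linarith
  have hr : 0 < R / (12 * Qc n) := by positivity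
  have hr1 : R / (12 * Qc n) ≤ L / 6 := by
    rw [div_le_iff₀ (by positivity)]; linarith
  have hr2 : R / (12 * Qc n) ≤ R / 12 := by
    gcongr; linarith
  have h := small hn hψ hl heq hz (s₀ := 1/2 * L) (by nlinarith) hN1 (hp z) (hD z) hr (by linarith)
  refine le_trans ?_ (h.trans (measureReal_mono (Set.inter_subset_inter_right _ (ball_subset_ball' ?_)) (fin_int _ _ _)))
  · have e : cg n / 48 / (2 * 2^n) / (CK n + 1)^(n-1) * (R / (12 * Qc n))^n / N^(n-1) =
      (cg n / 48 / (2 * 2^n) / (CK n + 1)^(n-1) / (12 * Qc n)^n) * R^n / N^(n-1) := by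
      rw [div_pow]; ring
    rw [e]
    gcongr
    exact min_le_left _ _
  · have : dist z p < R/2 := hzb
    linarith

lemma any_lb {n : ℕ} (hn : 1 ≤ n) {ψ : EE n → ℝ} {lam : ℝ} (hψ : ContDiff ℝ (⊤ : ℕ∞) ψ) (hl : 0 < lam)
    (heq : ∀ x, lap n ψ x = -lam * ψ x) {L N : ℝ} (hL : 0 < L) (hlL : lam * L^2 = 1) (hN1 : 1 ≤ N)
    (hp : ∀ x s, 0 < s → 0 < Dm ψ x s)
    (hD : ∀ x s, 0 < s → s ≤ 1/2 * L → Dm ψ x (2*s) ≤ Real.exp N * Dm ψ x s) (x : EE n) :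
    c1 n * (Qc n * L)^n / N^(n-1) ≤ volume.real ({x | 0 ≤ ψ x} ∩ ball x (Qc n * L)) := by
  have hQ := Qc_ge n
  have hQ0 : 0 < Qc n := by linarith
  have hρ : 0 < Qc n * L := by positivity
  by_cases hz : ∃ z ∈ ball x (Qc n * L / 2), ψ z = 0
  · exact local_lb hn hψ hl heq hL hlL hN1 hp hD hρ (by nlinarith) hz
  · push Not at hz
    obtain ⟨x₁, hx₁, hx₁0⟩ := no_neg hψ hl.le heq (y := x) (ρ := Qc n * L / 4) (by positivity) (by
      have e : lam * (Qc n * L / 4)^2 = (Qc n)^2/16 * (lam * L^2) := by ring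
      rw [e, hlL]
      have : (1:ℝ) ≤ 2^n := one_le_pow₀ (by norm_num)
      unfold Qc; nlinarith)
    have hx₁' : x₁ ∈ ball x (Qc n * L / 2) := closedBall_subset_ball (by linarith) hx₁
    have hpos : ∀ w ∈ ball x (Qc n * L / 2), 0 ≤ ψ w := by
      intro w hw
      by_contra hneg
      have hpc := (convex_ball x (Qc n * L / 2)).isPreconnected
      obtain ⟨v, hv, hv0⟩ := hpc.intermediate_value hw hx₁' hψ.continuous.continuousOn ⟨(not_le.mp hneg).le, hx₁0⟩
      exact hz v hv hv0
    have h1 : volume.real (ball x (Qc n * L / 2)) ≤ volume.real ({x | 0 ≤ ψ x} ∩ ball x (Qc n * L)) :=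
      measureReal_mono (fun w hw => ⟨hpos w hw, ball_subset_ball (by linarith) hw⟩) (fin_int _ _ _)
    refine le_trans ?_ h1
    rw [vol_ball _ (by positivity)]
    have hc := c1_pos n
    calc c1 n * (Qc n * L)^n / N^(n-1) ≤ c1 n * (Qc n * L)^n :=
          div_le_self (by positivity) (one_le_pow₀ hN1)
      _ ≤ om n / 2^n * (Qc n * L)^n := by gcongr; exact min_le_right _ _
      _ = _ := by rw [div_pow]; ring

lemma fub {n : ℕ} {P : Set (EE n)} (hP : MeasurableSet P) {ρ R v : ℝ} (hρ : 0 < ρ) (hR : 2 * ρ ≤ R)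
    (hv0 : 0 ≤ v)
    (hv : ∀ x, v ≤ volume.real (P ∩ ball x ρ)) (p : EE n) :
    v * volume.real (ball p (R/2)) ≤ volume.real (P ∩ ball p R) * (ρ^n * om n) := by
  set S : Set (EE n × EE n) := {q | q.1 ∈ ball p (R/2) ∧ q.2 ∈ P ∧ dist q.2 q.1 < ρ} with hS
  have hSm : MeasurableSet S := by
    refine (measurable_fst measurableSet_ball).inter ((measurable_snd hP).inter ?_)
    exact measurableSet_lt (measurable_snd.dist measurable_fst) measurable_const
  have h1 := Measure.prod_apply (μ := (volume : Measure (EE n))) (ν := (volume : Measure (EE n))) hSm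
  have h2 := Measure.prod_apply_symm (μ := (volume : Measure (EE n))) (ν := (volume : Measure (EE n))) hSm
  have hlow : ENNReal.ofReal v * volume (ball p (R/2)) ≤ ∫⁻ x : EE n, volume (Prod.mk x ⁻¹' S) := by
    rw [← lintegral_indicator_const measurableSet_ball]
    refine lintegral_mono fun x => ?_
    by_cases hx : x ∈ ball p (R/2)
    · rw [Set.indicator_of_mem hx]
      have : Prod.mk x ⁻¹' S = P ∩ ball x ρ := by
        ext y; simp only [hS, Set.mem_preimage, Set.mem_setOf_eq, Set.mem_inter_iff, mem_ball]
        exact ⟨fun h => h.2, fun h => ⟨hx, h⟩⟩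
      rw [this]
      exact (ENNReal.ofReal_le_iff_le_toReal (fin_int _ _ _)).mpr (hv x)
    · rw [Set.indicator_of_notMem hx]; exact zero_le
  have hup : ∫⁻ y : EE n, volume ((fun x => (x, y)) ⁻¹' S) ≤ ENNReal.ofReal (ρ^n * om n) * volume (P ∩ ball p R) := by
    rw [← lintegral_indicator_const (hP.inter measurableSet_ball)]
    refine lintegral_mono fun y => ?_
    by_cases hy : y ∈ P ∩ ball p R
    · rw [Set.indicator_of_mem hy]
      calc volume ((fun x => (x, y)) ⁻¹' S) ≤ volume (ball y ρ) := measure_mono fun x hx => by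
            rw [mem_ball, dist_comm]; exact hx.2.2
        _ = ENNReal.ofReal (ρ^n * om n) := by
            rw [← vol_ball y hρ]; exact (ENNReal.ofReal_toReal measure_ball_lt_top.ne).symm
    · rw [Set.indicator_of_notMem hy]
      have : (fun x => (x, y)) ⁻¹' S = ∅ := by
        ext x
        simp only [Set.mem_preimage, Set.mem_empty_iff_false, iff_false]
        rintro ⟨a, b, c⟩
        refine hy ⟨b, ?_⟩
        simp only [mem_ball] at a ⊢
        simp only at c
        linarith [dist_triangle y x p]
      rw [this]; simp
  rw [← h1, h2] at hlow
  have h3 := ENNReal.toReal_mono (ENNReal.mul_ne_top ENNReal.ofReal_ne_top (fin_int P p R)) (hlow.trans hup)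
  have := om_pos n
  rw [ENNReal.toReal_mul, ENNReal.toReal_mul, ENNReal.toReal_ofReal hv0, ENNReal.toReal_ofReal (by positivity)] at h3
  unfold Measure.real
  linarith

theorem positivity_volume_ratio_lower_bound
    (n : ℕ) (hn : 3 ≤ n) :
    ∃ ε₀ R₀ a₃ : ℝ, ε₀ ∈ Set.Ioo (0:ℝ) 1 ∧ 0 < R₀ ∧ 0 < a₃ ∧
      ∀ (ψ : EuclideanSpace ℝ (Fin n) → ℝ) (lam : ℝ),
        1 ≤ lam → ContDiff ℝ (⊤ : ℕ∞) ψ → ZnPeriodic n ψ →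
        (∀ x, lap n ψ x = -lam * ψ x) → (∃ x, ψ x ≠ 0) →
        ∀ (p : EuclideanSpace ℝ (Fin n)) (R : ℝ), 0 < R → R < R₀ →
        (∃ z ∈ Metric.ball p (R/2), ψ z = 0) →
        a₃ / (sSup {t : ℝ | ∃ (x : EuclideanSpace ℝ (Fin n)) (s : ℝ),
              0 < s ∧ s ≤ ε₀ * lam ^ (-(1:ℝ)/2) ∧
              t = Real.log (sSup ((fun y => (ψ y)^2) '' Metric.ball x (2*s)) /
                    sSup ((fun y => (ψ y)^2) '' Metric.ball x s))}) ^ (n-1) ≤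
          (volume ({y | 0 ≤ ψ y} ∩ Metric.ball p R)).toReal /
            (volume (Metric.ball p R)).toReal := by
  have hc1 := c1_pos n
  have hom := om_pos n
  refine ⟨1/2, 1, c1 n / (2^n * om n), ⟨by norm_num, by norm_num⟩, one_pos, by positivity, ?_⟩
  intro ψ lam hlam hψ _ heq hne p R hR _ hz
  set T : Set ℝ := {t : ℝ | ∃ (x : EuclideanSpace ℝ (Fin n)) (s : ℝ),
              0 < s ∧ s ≤ 1/2 * lam ^ (-(1:ℝ)/2) ∧
              t = Real.log (sSup ((fun y => (ψ y)^2) '' Metric.ball x (2*s)) /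
                    sSup ((fun y => (ψ y)^2) '' Metric.ball x s))} with hT
  by_cases hb : BddAbove T
  swap
  · rw [Real.sSup_of_not_bddAbove hb, zero_pow (by omega), div_zero]
    positivity
  set N := sSup T with hNdef
  have hl : 0 < lam := by linarith
  set L := lam ^ (-(1:ℝ)/2) with hLdef
  have hL : 0 < L := Real.rpow_pos_of_pos hl _
  have hlL : lam * L^2 = 1 := by
    rw [hLdef, ← Real.rpow_natCast, ← Real.rpow_mul hl.le]
    norm_num
    rw [Real.rpow_neg_one]
    exact mul_inv_cancel₀ hl.ne'
  have hψc := hψ.continuous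
  have hN : ∀ x s, 0 < s → s ≤ 1/2 * L → Real.log (Dm ψ x (2*s) / Dm ψ x s) ≤ N :=
    fun x s h1 h2 => le_csSup hb ⟨x, s, h1, h2, rfl⟩
  have hp : ∀ x s, 0 < s → 0 < Dm ψ x s := fun x s hs =>
    Dm_pos hψc (s₀ := 1/2 * L) (by positivity) hN hne x hs
  have hD : ∀ x s, 0 < s → s ≤ 1/2 * L → Dm ψ x (2*s) ≤ Real.exp N * Dm ψ x s :=
    fun x s h1 h2 => doubling hψc h1 (hN x s h1 h2) (hp x s h1)
  have hN1 : 1 ≤ N := by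
    obtain ⟨z, _, hz0⟩ := hz
    exact N_ge_one hψ (s₀ := 1/2 * L) (by positivity) hz0 (hp z) (hD z)
  have hn1 : 1 ≤ n := by omega
  have hN0 : 0 < N ^ (n-1) := by positivity
  change _ ≤ volume.real ({y | 0 ≤ ψ y} ∩ ball p R) / volume.real (ball p R)
  rw [vol_ball p hR, le_div_iff₀ (by positivity)]
  by_cases hRL : R ≤ 2 * Qc n * L
  · have h := local_lb hn1 hψ hl heq hL hlL hN1 hp hD hR hRL hz
    refine le_trans ?_ h
    have e : c1 n / (2^n * om n) / N^(n-1) * (R^n * om n) = (c1 n * R^n / N^(n-1)) / 2^n := by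
      field_simp
    rw [e]
    exact div_le_self (by positivity) (one_le_pow₀ (by norm_num))
  · have hQ := Qc_ge n
    have hQ0 : 0 < Qc n := by linarith
    have hρ : 0 < Qc n * L := by positivity
    have hf := fub (measurableSet_le measurable_const hψc.measurable) hρ (R := R) (by linarith [not_le.mp hRL])
      (by positivity) (any_lb hn1 hψ hl heq hL hlL hN1 hp hD) p
    rw [vol_ball p (by positivity)] at hf
    have e : c1 n * (Qc n * L)^n / N^(n-1) * ((R/2)^n * om n) =
        (c1 n / (2^n * om n) / N^(n-1) * (R^n * om n)) * ((Qc n * L)^n * om n) := by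
      rw [div_pow]; field_simp
    rw [e] at hf
    exact le_of_mul_le_mul_right hf (by positivity)
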